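/- Let (l,r) be a nonempty open interval of ℝ (with −∞ ≤ l < r ≤ ∞), let s : (l,r) → ℝ be strictly increasing and continuously differentiable with s'(x) > 0 for all x, and assume lim_{x→l⁺} s(x) = −∞ and lim_{x→r⁻} s(x) = 1 (so that s < 1 on (l,r)). Fix y ∈ (l,r) and set u(z) := 1 − s(max(z,y)). Then for every x ∈ (l,r) the oriented integral r_s(x) := ∫_y^x s'(z)/u(z)² dz is well defined and finite, with r_s(x) = (s(x) − s(y))/(1−s(y))² for x ≤ y and r_s(x) = 1/(1−s(x)) − 1/(1−s(y)) for x ≥ y; consequently r_s(x) → −∞ as x → l⁺ and r_s(x) → +∞ as x → r⁻. -/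

import Mathlib

/-!
Since `s` is strictly increasing with limit `1` at `r`, it stays below `1` on `(l, r)`, so
`u > 0` there and the integrand `s' / u²` is continuous. To the left of `y` the function `u` is the
constant `1 - s y`, so `s / (1 - s y)²` is an antiderivative; to the right of `y` an antiderivative
is `1 / (1 - s)`. The fundamental theorem of calculus gives both formulas, and these give the limits
because `s → -∞` at `l` and `1 - s → 0⁺` at `r`.
-/

open MeasureTheory Filter Set Topology

/-- A left neighbourhood of `r > l` in `EReal` contains real points, including for `r = ⊤`;
this makes the limit of `s` at `r` non-vacuous. -/
lemma neBot_comap_coe_nhdsLT {l r : EReal} (hlr : l < r) :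
    (Filter.comap (fun x : ℝ => (x : EReal)) (𝓝[<] r)).NeBot := by
  rw [Filter.comap_neBot_iff]
  intro t ht
  obtain ⟨a, ha, hat⟩ := (mem_nhdsLT_iff_exists_Ioo_subset' hlr).1 ht
  obtain ⟨x, hx1, hx2⟩ := EReal.lt_iff_exists_real_btwn.1 ha
  exact ⟨x, hat ⟨hx1, hx2⟩⟩

/-- the scale function `r_s(x) = ∫_y^x s'(z)/u(z,y)² dz` of the recurrent
transform, in the case `s(l+) = −∞`, `s(r−) = 1`, where `u(z,y) = 1 − s(z∨y)`. -/
theorem stmt_2 (l r : EReal) (hlr : l < r)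
    (s s' u : ℝ → ℝ) (y : ℝ) (hy : l < (y : EReal) ∧ (y : EReal) < r)
    (hmono : StrictMonoOn s {x : ℝ | l < (x : EReal) ∧ (x : EReal) < r})
    (hderiv : ∀ x : ℝ, l < (x : EReal) → (x : EReal) < r → HasDerivAt s (s' x) x)
    (hs'cont : ContinuousOn s' {x : ℝ | l < (x : EReal) ∧ (x : EReal) < r})
    (hs'pos : ∀ x : ℝ, l < (x : EReal) → (x : EReal) < r → 0 < s' x)
    (hliml : Tendsto s (Filter.comap (fun x : ℝ => (x : EReal)) (𝓝[>] l)) atBot)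
    (hlimr : Tendsto s (Filter.comap (fun x : ℝ => (x : EReal)) (𝓝[<] r)) (𝓝 1))
    (hu : ∀ z : ℝ, u z = 1 - s (max z y)) :
    (∀ x : ℝ, l < (x : EReal) → (x : EReal) < r →
      IntervalIntegrable (fun z => s' z / (u z) ^ 2) volume y x) ∧
    (∀ x : ℝ, l < (x : EReal) → (x : EReal) < r → x ≤ y →
      ∫ z in y..x, s' z / (u z) ^ 2 = (s x - s y) / (1 - s y) ^ 2) ∧
    (∀ x : ℝ, l < (x : EReal) → (x : EReal) < r → y ≤ x →
      ∫ z in y..x, s' z / (u z) ^ 2 = 1 / (1 - s x) - 1 / (1 - s y)) ∧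
    Tendsto (fun x : ℝ => ∫ z in y..x, s' z / (u z) ^ 2)
      (Filter.comap (fun x : ℝ => (x : EReal)) (𝓝[>] l)) atBot ∧
    Tendsto (fun x : ℝ => ∫ z in y..x, s' z / (u z) ^ 2)
      (Filter.comap (fun x : ℝ => (x : EReal)) (𝓝[<] r)) atTop := by
  obtain ⟨hly, hyr⟩ := hy
  have hnear_l : ∀ᶠ x : ℝ in Filter.comap (fun x : ℝ => (x : EReal)) (𝓝[>] l),
      l < (x : EReal) ∧ (x : EReal) < y :=
    Filter.preimage_mem_comap (Ioo_mem_nhdsGT hly)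
  have hnear_r : ∀ a : ℝ, (a : EReal) < r →
      ∀ᶠ x : ℝ in Filter.comap (fun x : ℝ => (x : EReal)) (𝓝[<] r),
      (a : EReal) < (x : EReal) ∧ (x : EReal) < r := fun a ha =>
    Filter.preimage_mem_comap (Ioo_mem_nhdsLT ha)
  have hs1 : ∀ x : ℝ, l < (x : EReal) → (x : EReal) < r → s x < 1 := by
    intro x hlx hxr
    have := neBot_comap_coe_nhdsLT hlr
    -- An intermediate point `b` turns the weak bound `s b ≤ 1` of the limit into `s x < 1`.
    obtain ⟨b, hxb, hbr⟩ := EReal.lt_iff_exists_real_btwn.1 hxr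
    have hb : s b ≤ 1 := by
      refine ge_of_tendsto hlimr ?_
      filter_upwards [hnear_r b hbr] with z hz
      exact (hmono ⟨hlx.trans hxb, hbr⟩ ⟨(hlx.trans hxb).trans hz.1, hz.2⟩
        (EReal.coe_lt_coe_iff.1 hz.1)).le
    exact (hmono ⟨hlx, hxr⟩ ⟨hlx.trans hxb, hbr⟩ (EReal.coe_lt_coe_iff.1 hxb)).trans_le hb
  have hsub : ∀ x : ℝ, l < (x : EReal) → (x : EReal) < r → ∀ z ∈ uIcc y x,
      l < (z : EReal) ∧ (z : EReal) < r := by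
    intro x hlx hxr z hz
    rcases le_total y x with h | h
    · rw [uIcc_of_le h] at hz
      exact ⟨hly.trans_le (EReal.coe_le_coe_iff.2 hz.1),
        (EReal.coe_le_coe_iff.2 hz.2).trans_lt hxr⟩
    · rw [uIcc_of_ge h] at hz
      exact ⟨hlx.trans_le (EReal.coe_le_coe_iff.2 hz.1),
        (EReal.coe_le_coe_iff.2 hz.2).trans_lt hyr⟩
  have hmax : ∀ z : ℝ, l < (z : EReal) → (z : EReal) < r →
      l < ((max z y : ℝ) : EReal) ∧ ((max z y : ℝ) : EReal) < r := by
    intro z hlz hzr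
    rcases max_choice z y with h | h <;> rw [h]
    exacts [⟨hlz, hzr⟩, ⟨hly, hyr⟩]
  have hint : ∀ x : ℝ, l < (x : EReal) → (x : EReal) < r →
      IntervalIntegrable (fun z => s' z / (u z) ^ 2) volume y x := by
    intro x hlx hxr
    refine ContinuousOn.intervalIntegrable fun z hz => ?_
    obtain ⟨hlz, hzr⟩ := hsub x hlx hxr z hz
    obtain ⟨hlm, hmr⟩ := hmax z hlz hzr
    have hucont : ContinuousAt u z := by
      rw [funext hu]
      have h2 : ContinuousAt (fun w : ℝ => max w y) z := by fun_prop
      exact continuousAt_const.sub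
        (ContinuousAt.comp (f := fun w : ℝ => max w y) (hderiv _ hlm hmr).continuousAt h2)
    refine ContinuousWithinAt.div (hs'cont.mono (hsub x hlx hxr) z hz)
      (hucont.continuousWithinAt.pow 2) (pow_ne_zero 2 ?_)
    rw [hu]
    exact (sub_pos.2 (hs1 _ hlm hmr)).ne'
  have hleft : ∀ x : ℝ, l < (x : EReal) → (x : EReal) < r → x ≤ y →
      ∫ z in y..x, s' z / (u z) ^ 2 = (s x - s y) / (1 - s y) ^ 2 := by
    intro x hlx hxr hxy
    rw [intervalIntegral.integral_eq_sub_of_hasDerivAt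
      (f := fun z => s z / (1 - s y) ^ 2) ?_ (hint x hlx hxr), sub_div]
    intro z hz
    obtain ⟨hlz, hzr⟩ := hsub x hlx hxr z hz
    rw [uIcc_of_ge hxy] at hz
    rw [hu, max_eq_right hz.2]
    exact (hderiv z hlz hzr).div_const _
  have hright : ∀ x : ℝ, l < (x : EReal) → (x : EReal) < r → y ≤ x →
      ∫ z in y..x, s' z / (u z) ^ 2 = 1 / (1 - s x) - 1 / (1 - s y) := by
    intro x hlx hxr hyx
    rw [intervalIntegral.integral_eq_sub_of_hasDerivAt
      (f := fun z => 1 / (1 - s z)) ?_ (hint x hlx hxr)]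
    intro z hz
    obtain ⟨hlz, hzr⟩ := hsub x hlx hxr z hz
    rw [uIcc_of_le hyx] at hz
    rw [hu, max_eq_left hz.1]
    simpa using ((hderiv z hlz hzr).const_sub 1).fun_inv (sub_pos.2 (hs1 z hlz hzr)).ne'
  refine ⟨hint, hleft, hright, ?_, ?_⟩
  · have hpos : 0 < (1 - s y) ^ 2 := pow_pos (sub_pos.2 (hs1 y hly hyr)) 2
    have h := (tendsto_atBot_add_const_right _ (-s y) hliml).atBot_div_const hpos
    refine h.congr' ?_
    filter_upwards [hnear_l] with x hx
    rw [hleft x hx.1 (hx.2.trans hyr) (EReal.coe_lt_coe_iff.1 hx.2).le, sub_eq_add_neg (s x)]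
  · have h0 : Tendsto (fun x => 1 - s x)
        (Filter.comap (fun x : ℝ => (x : EReal)) (𝓝[<] r)) (𝓝[>] 0) := by
      refine tendsto_nhdsWithin_iff.2 ⟨by simpa using hlimr.const_sub 1, ?_⟩
      filter_upwards [hnear_r y hyr] with x hx
      exact sub_pos.2 (hs1 x (hly.trans hx.1) hx.2)
    have h := tendsto_atTop_add_const_right _ (-(1 / (1 - s y))) h0.inv_tendsto_nhdsGT_zero
    refine h.congr' ?_
    filter_upwards [hnear_r y hyr] with x hx
    rw [hright x (hly.trans hx.1) hx.2 (EReal.coe_lt_coe_iff.1 hx.1).le]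
    simp [sub_eq_add_neg]
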